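/- Let l_1,…,l_n and r_1,…,r_n be d-dimensional bit vectors and let ℓ ≥ 1, p ∈ {0,1}, q ≥ 0 be integers, and let G = G_{L,R,ℓ,p,q}. Then for every pair of vertices s and t of G, dist_G(s, t) ≤ 6ℓ − 3p + q; in particular the diameter of G is at most 6ℓ − 3p + q. -/

import Mathlib

namespace GraphOV

/-- Two bit vectors (functions into `Fin 2`) are orthogonal if in every coordinate
at least one of them is `0`. -/
def Orth {d : ℕ} (a b : Fin d → Fin 2) : Prop := ∀ k, a k = 0 ∨ b k = 0

/-- A system of internally disjoint paths joining exterior vertices from `E`: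
for each path name `i : ι` we record its two endpoints and its length. -/
structure PathSys (E : Type) (ι : Type) where
  src : ι → E
  dst : ι → E
  len : ι → ℕ

namespace PathSys

variable {E ι : Type}

/-- Endpoints of zero-length paths get identified. -/
def idRel (S : PathSys E ι) (a b : E) : Prop :=
  ∃ i, S.len i = 0 ∧ S.src i = a ∧ S.dst i = b

/-- Vertices of the glued graph: exterior vertices (up to identification) together
with, for each path of length `m`, fresh interior vertices at positions `1,…,m-1`. -/
def Vert (S : PathSys E ι) : Type :=
  Quot S.idRel ⊕ Σ i : ι, {t : ℕ // 0 < t ∧ t < S.len i}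

/-- The vertex corresponding to an exterior vertex. -/
def ext (S : PathSys E ι) (a : E) : S.Vert := Sum.inl (Quot.mk _ a)

/-- The `t`-th vertex on the path named `i` (for `0 ≤ t ≤ S.len i`). -/
def pt (S : PathSys E ι) (i : ι) (t : ℕ) : S.Vert :=
  if h : 0 < t ∧ t < S.len i then Sum.inr ⟨i, t, h⟩
  else if t = 0 then S.ext (S.src i) else S.ext (S.dst i)

/-- The glued graph: consecutive vertices on each path are adjacent. -/
def graph (S : PathSys E ι) : SimpleGraph S.Vert :=
  SimpleGraph.fromRel fun a b =>
    ∃ i t, t + 1 ≤ S.len i ∧ a = S.pt i t ∧ b = S.pt i (t + 1)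

/-- The set of vertices lying on the path named `i`. -/
def onPath (S : PathSys E ι) (i : ι) : Set S.Vert :=
  {v | ∃ t ≤ S.len i, v = S.pt i t}

/-- A walk in the glued graph contains the path named `i` entirely if all vertices of
that path occur consecutively (in forward or backward order) on the walk. -/
def WalkContainsPath (S : PathSys E ι) {x y : S.Vert} (W : S.graph.Walk x y) (i : ι) : Prop :=
  ∃ a, a + S.len i ≤ W.length ∧
    ((∀ t ≤ S.len i, W.getVert (a + t) = S.pt i t) ∨
     (∀ t ≤ S.len i, W.getVert (a + t) = S.pt i (S.len i - t)))

end PathSys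

/-- The exterior vertices of the graph `G_{L,R,ℓ,p,q}`. -/
inductive Ext (n d : ℕ) : Type
  | uL : Fin n → Ext n d
  | uR : Fin n → Ext n d
  | vL : Fin n → Ext n d
  | vR : Fin n → Ext n d
  | wL : Fin d → Ext n d
  | wR : Fin d → Ext n d
  | xL : Ext n d
  | xR : Ext n d
  | yL : Ext n d
  | yR : Ext n d

/-- Names for the paths of the graph `G_{L,R,ℓ,p,q}`. -/
inductive Idx (n d : ℕ) (l r : Fin n → Fin d → Fin 2) : Type
  | uvL : Fin n → Idx n d l r
  | uvR : Fin n → Idx n d l r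
  | vxL : Fin n → Idx n d l r
  | vxR : Fin n → Idx n d l r
  | vwL : (i : Fin n) → (k : Fin d) → l i k = 1 → Idx n d l r
  | vwR : (j : Fin n) → (k : Fin d) → r j k = 1 → Idx n d l r
  | ywL : Fin d → Idx n d l r
  | ywR : Fin d → Idx n d l r
  | ww : Fin d → Idx n d l r
  | xyL : Idx n d l r
  | xyR : Idx n d l r
  | yy : Idx n d l r

/-- The path system defining the graph `G_{L,R,ℓ,p,q}`. -/
def sys (n d : ℕ) (l r : Fin n → Fin d → Fin 2) (ℓ p q : ℕ) :
    PathSys (Ext n d) (Idx n d l r) where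
  src := fun i => match i with
    | .uvL i => .uL i
    | .uvR i => .uR i
    | .vxL i => .vL i
    | .vxR i => .vR i
    | .vwL i _ _ => .vL i
    | .vwR j _ _ => .vR j
    | .ywL _ => .yL
    | .ywR _ => .yR
    | .ww k => .wL k
    | .xyL => .xL
    | .xyR => .xR
    | .yy => .yL
  dst := fun i => match i with
    | .uvL i => .vL i
    | .uvR i => .vR i
    | .vxL _ => .xL
    | .vxR _ => .xR
    | .vwL _ k _ => .wL k
    | .vwR _ k _ => .wR k
    | .ywL k => .wL k
    | .ywR k => .wR k
    | .ww k => .wR k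
    | .xyL => .yL
    | .xyR => .yR
    | .yy => .yR
  len := fun i => match i with
    | .uvL _ => ℓ - p
    | .uvR _ => ℓ - p
    | .vxL _ => ℓ
    | .vxR _ => ℓ
    | .vwL _ _ _ => ℓ
    | .vwR _ _ _ => ℓ
    | .ywL _ => ℓ
    | .ywR _ => ℓ
    | .ww _ => q
    | .xyL => ℓ - p
    | .xyR => ℓ - p
    | .yy => p + q

/-- The set `P_i^L`. -/
def PL (n d : ℕ) (l r : Fin n → Fin d → Fin 2) (ℓ p q : ℕ) (i : Fin n) :
    Set (sys n d l r ℓ p q).Vert :=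
  (sys n d l r ℓ p q).onPath (.uvL i) ∪
    ((sys n d l r ℓ p q).onPath (.vxL i) \ {(sys n d l r ℓ p q).ext .xL}) ∪
    ⋃ (k : Fin d) (h : l i k = 1),
      ((sys n d l r ℓ p q).onPath (.vwL i k h) \ {(sys n d l r ℓ p q).ext (.wL k)})

/-- The set `P_j^R`. -/
def PR (n d : ℕ) (l r : Fin n → Fin d → Fin 2) (ℓ p q : ℕ) (j : Fin n) :
    Set (sys n d l r ℓ p q).Vert :=
  (sys n d l r ℓ p q).onPath (.uvR j) ∪
    ((sys n d l r ℓ p q).onPath (.vxR j) \ {(sys n d l r ℓ p q).ext .xR}) ∪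
    ⋃ (k : Fin d) (h : r j k = 1),
      ((sys n d l r ℓ p q).onPath (.vwR j k h) \ {(sys n d l r ℓ p q).ext (.wR k)})

/-- The set `V^L`. -/
def VL (n d : ℕ) (l r : Fin n → Fin d → Fin 2) (ℓ p q : ℕ) :
    Set (sys n d l r ℓ p q).Vert := ⋃ i : Fin n, PL n d l r ℓ p q i

/-- The set `V^R`. -/
def VR (n d : ℕ) (l r : Fin n → Fin d → Fin 2) (ℓ p q : ℕ) :
    Set (sys n d l r ℓ p q).Vert := ⋃ j : Fin n, PR n d l r ℓ p q j

/-- The set `V^M` of all remaining vertices. -/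
def VM (n d : ℕ) (l r : Fin n → Fin d → Fin 2) (ℓ p q : ℕ) :
    Set (sys n d l r ℓ p q).Vert := (VL n d l r ℓ p q ∪ VR n d l r ℓ p q)ᶜ

/-!
Let `D = 6ℓ - 3p + q`. Every vertex `s` satisfies `dist(s, y^L) + dist(s, y^R) ≤ D`: on the paths
joining the two sides this is immediate, and every other vertex is within `3ℓ - 2p` of the `y` on
its own side, hence within `3ℓ - 2p + (p + q)` of the other one. For two vertices `s` and `t` the
detours through `y^L` and through `y^R` therefore have total length at most `2D`, so one of them
has length at most `D`.
-/

theorem ediam_le_of_edist_add_edist_le {V : Type*} {G : SimpleGraph V} {y z : V} {D : ℕ∞}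
    (h : ∀ s, G.edist s y + G.edist s z ≤ D) : G.ediam ≤ D := by
  refine SimpleGraph.ediam_le_of_edist_le fun s t => ?_
  by_contra! hD
  have detour_gt (c : V) : D < G.edist s c + G.edist t c := by
    rw [G.edist_comm (u := t)]
    exact hD.trans_le G.edist_triangle
  have detours_le : (G.edist s y + G.edist t y) + (G.edist s z + G.edist t z) ≤ D + D := by
    rw [add_add_add_comm]
    exact add_le_add (h s) (h t)
  exact (ENat.add_lt_add (detour_gt y) (detour_gt z)).not_ge detours_le

theorem edist_add_edist_le_of_edist_le {V : Type*} {G : SimpleGraph V} {s y z : V} {m c : ℕ∞}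
    (hy : G.edist s y ≤ m) (hyz : G.edist y z ≤ c) :
    G.edist s y + G.edist s z ≤ m + (m + c) :=
  add_le_add hy (G.edist_triangle.trans (add_le_add hy hyz))

namespace PathSys

variable {E ι : Type} (S : PathSys E ι)

theorem pt_zero (i : ι) : S.pt i 0 = S.ext (S.src i) := by
  simp [pt]

theorem pt_len (i : ι) : S.pt i (S.len i) = S.ext (S.dst i) := by
  by_cases h : S.len i = 0
  · rw [h, pt_zero]
    exact congrArg Sum.inl (Quot.sound ⟨i, h, rfl, rfl⟩)
  · simp [pt, h]

theorem pt_of_interior (i : ι) {t : ℕ} (ht : 0 < t ∧ t < S.len i) :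
    S.pt i t = Sum.inr ⟨i, t, ht⟩ :=
  dif_pos ht

variable {S} in
theorem vert_cases {P : S.Vert → Prop} (ext : ∀ e, P (S.ext e))
    (pt : ∀ i t, t ≤ S.len i → P (S.pt i t)) (s : S.Vert) : P s := by
  rcases s with e | ⟨i, t, ht⟩
  · induction e using Quot.ind with
    | mk e => exact ext e
  · exact S.pt_of_interior i ht ▸ pt i t ht.2.le

theorem edist_pt_succ_le_one {i : ι} {t : ℕ} (ht : t + 1 ≤ S.len i) :
    S.graph.edist (S.pt i t) (S.pt i (t + 1)) ≤ 1 := by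
  rw [SimpleGraph.edist_le_one_iff_adj_or_eq, graph, SimpleGraph.fromRel_adj]
  by_cases heq : S.pt i t = S.pt i (t + 1)
  · exact .inr heq
  · exact .inl ⟨heq, .inl ⟨i, t, ht, rfl, rfl⟩⟩

theorem edist_pt_add_le (i : ι) (t k : ℕ) (h : t + k ≤ S.len i) :
    S.graph.edist (S.pt i t) (S.pt i (t + k)) ≤ k := by
  induction k with
  | zero => simp
  | succ k ih =>
    calc S.graph.edist (S.pt i t) (S.pt i (t + (k + 1)))
        ≤ S.graph.edist (S.pt i t) (S.pt i (t + k)) +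
          S.graph.edist (S.pt i (t + k)) (S.pt i (t + k + 1)) := S.graph.edist_triangle
      _ ≤ k + 1 := add_le_add (ih (by omega)) (S.edist_pt_succ_le_one h)
      _ = ((k + 1 : ℕ) : ℕ∞) := (Nat.cast_succ k).symm

variable {S} {i : ι} {t a b m : ℕ} {y z : S.Vert}

theorem edist_pt_le_of_src (ht : t ≤ S.len i)
    (ha : S.graph.edist (S.ext (S.src i)) y ≤ a) :
    S.graph.edist (S.pt i t) y ≤ (t + a : ℕ) := by
  have to_src : S.graph.edist (S.pt i t) (S.ext (S.src i)) ≤ t := by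
    simpa only [zero_add, pt_zero, S.graph.edist_comm] using S.edist_pt_add_le i 0 t (by omega)
  rw [Nat.cast_add]
  exact S.graph.edist_triangle.trans (add_le_add to_src ha)

theorem edist_pt_le_of_dst (ht : t ≤ S.len i)
    (hb : S.graph.edist (S.ext (S.dst i)) y ≤ b) :
    S.graph.edist (S.pt i t) y ≤ (S.len i - t + b : ℕ) := by
  have to_dst : S.graph.edist (S.pt i t) (S.ext (S.dst i)) ≤ (S.len i - t : ℕ) := by
    simpa only [Nat.add_sub_cancel' ht, pt_len] using
      S.edist_pt_add_le i t (S.len i - t) (by omega)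
  rw [Nat.cast_add]
  exact S.graph.edist_triangle.trans (add_le_add to_dst hb)

variable (S i) in
theorem edist_src_le_of_dst (hb : S.graph.edist (S.ext (S.dst i)) y ≤ b) :
    S.graph.edist (S.ext (S.src i)) y ≤ (S.len i + b : ℕ) := by
  simpa only [pt_zero, Nat.sub_zero] using edist_pt_le_of_dst (Nat.zero_le (S.len i)) hb

variable (S i) in
theorem edist_dst_le_of_src (ha : S.graph.edist (S.ext (S.src i)) y ≤ a) :
    S.graph.edist (S.ext (S.dst i)) y ≤ (S.len i + a : ℕ) := by
  simpa only [pt_len] using edist_pt_le_of_src (le_refl (S.len i)) ha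

theorem edist_pt_le_of_ends (ht : t ≤ S.len i)
    (ha : S.graph.edist (S.ext (S.src i)) y ≤ a) (hb : S.graph.edist (S.ext (S.dst i)) y ≤ b)
    (hm : S.len i + a + b ≤ 2 * m + 1) : S.graph.edist (S.pt i t) y ≤ m := by
  -- The routes through the two ends have total length `len + a + b`: take the shorter one.
  rcases le_total (t + a) (S.len i - t + b) with hle | hle
  · exact (edist_pt_le_of_src ht ha).trans (Nat.cast_le.mpr (by omega))
  · exact (edist_pt_le_of_dst ht hb).trans (Nat.cast_le.mpr (by omega))

theorem edist_pt_add_edist_pt_le (ht : t ≤ S.len i)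
    (ha : S.graph.edist (S.ext (S.src i)) y ≤ a) (hb : S.graph.edist (S.ext (S.dst i)) z ≤ b) :
    S.graph.edist (S.pt i t) y + S.graph.edist (S.pt i t) z ≤ (S.len i + a + b : ℕ) :=
  calc S.graph.edist (S.pt i t) y + S.graph.edist (S.pt i t) z
      ≤ (t + a : ℕ) + (S.len i - t + b : ℕ) :=
        add_le_add (edist_pt_le_of_src ht ha) (edist_pt_le_of_dst ht hb)
    _ = (S.len i + a + b : ℕ) := by rw [← Nat.cast_add, Nat.cast_inj]; omega

end PathSys

namespace Ext

variable {n d : ℕ}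

/-- The hub of an exterior vertex: whichever of `y^L` and `y^R` lies on its side. -/
def hub : Ext n d → Ext n d
  | uL _ | vL _ | wL _ | xL | yL => yL
  | uR _ | vR _ | wR _ | xR | yR => yR

/-- An upper bound for the distance from an exterior vertex to its hub, namely the length of the
route that leads from `u` through `v` and `x` to `y`, or from `w` directly to `y`. -/
def hubDist (ℓ p : ℕ) : Ext n d → ℕ
  | uL _ | uR _ => (ℓ - p) + (ℓ + (ℓ - p))
  | vL _ | vR _ => ℓ + (ℓ - p)
  | wL _ | wR _ => ℓ
  | xL | xR => ℓ - p
  | yL | yR => 0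

theorem hub_eq_yL_or_yR (e : Ext n d) : e.hub = yL ∨ e.hub = yR := by
  cases e <;> simp only [hub, true_or, or_true]

theorem hubDist_le {ℓ p : ℕ} (hpℓ : 3 * p ≤ 2 * ℓ + 1) (e : Ext n d) :
    e.hubDist ℓ p ≤ 3 * ℓ - 2 * p := by
  cases e <;> simp only [hubDist] <;> omega

end Ext

section

variable {n d ℓ p q : ℕ} {l r : Fin n → Fin d → Fin 2}

theorem edist_ext_hub_le (e : Ext n d) :
    (sys n d l r ℓ p q).graph.edist ((sys n d l r ℓ p q).ext e)
      ((sys n d l r ℓ p q).ext e.hub) ≤ e.hubDist ℓ p := by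
  set S := sys n d l r ℓ p q
  have hyL : S.graph.edist (S.ext .yL) (S.ext .yL) ≤ (0 : ℕ) := SimpleGraph.edist_self.le
  have hyR : S.graph.edist (S.ext .yR) (S.ext .yR) ≤ (0 : ℕ) := SimpleGraph.edist_self.le
  have hxL : S.graph.edist (S.ext .xL) (S.ext .yL) ≤ (ℓ - p : ℕ) :=
    S.edist_src_le_of_dst .xyL hyL
  have hxR : S.graph.edist (S.ext .xR) (S.ext .yR) ≤ (ℓ - p : ℕ) :=
    S.edist_src_le_of_dst .xyR hyR
  have hvL (j : Fin n) : S.graph.edist (S.ext (.vL j)) (S.ext .yL) ≤ (ℓ + (ℓ - p) : ℕ) :=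
    S.edist_src_le_of_dst (.vxL j) hxL
  have hvR (j : Fin n) : S.graph.edist (S.ext (.vR j)) (S.ext .yR) ≤ (ℓ + (ℓ - p) : ℕ) :=
    S.edist_src_le_of_dst (.vxR j) hxR
  cases e with
  | uL j => exact S.edist_src_le_of_dst (.uvL j) (hvL j)
  | uR j => exact S.edist_src_le_of_dst (.uvR j) (hvR j)
  | vL j => exact hvL j
  | vR j => exact hvR j
  | wL k => exact S.edist_dst_le_of_src (.ywL k) hyL
  | wR k => exact S.edist_dst_le_of_src (.ywR k) hyR
  | xL => exact hxL
  | xR => exact hxR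
  | yL => exact hyL
  | yR => exact hyR

-- The paths `π(v_i, w_k)` have total `4ℓ - p`; they are where `3p ≤ 2ℓ + 1` comes from.
theorem path_on_one_side_or_crossing (hpℓ : 3 * p ≤ 2 * ℓ + 1) (i : Idx n d l r) :
    let S := sys n d l r ℓ p q
    let total := S.len i + (S.src i).hubDist ℓ p + (S.dst i).hubDist ℓ p
    ((S.src i).hub = (S.dst i).hub ∧ total ≤ 2 * (3 * ℓ - 2 * p) + 1) ∨
      ((S.src i).hub = .yL ∧ (S.dst i).hub = .yR ∧ total ≤ 6 * ℓ - 3 * p + q) := by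
  cases i <;> simp only [sys, Ext.hub, Ext.hubDist, true_and, reduceCtorEq, false_and, or_false,
    false_or] <;> omega

theorem edist_yL_add_edist_yR_le_of_edist_hub_le (hpℓ : 3 * p ≤ 2 * ℓ + 1)
    {s : (sys n d l r ℓ p q).Vert} {e : Ext n d}
    (hs : (sys n d l r ℓ p q).graph.edist s ((sys n d l r ℓ p q).ext e.hub) ≤
      (3 * ℓ - 2 * p : ℕ)) :
    (sys n d l r ℓ p q).graph.edist s ((sys n d l r ℓ p q).ext .yL) +
      (sys n d l r ℓ p q).graph.edist s ((sys n d l r ℓ p q).ext .yR) ≤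
        (6 * ℓ - 3 * p + q : ℕ) := by
  set S := sys n d l r ℓ p q
  have hyy : S.graph.edist (S.ext .yL) (S.ext .yR) ≤ (p + q : ℕ) :=
    S.edist_src_le_of_dst .yy (b := 0) SimpleGraph.edist_self.le
  have total_eq : 6 * ℓ - 3 * p + q = 3 * ℓ - 2 * p + (3 * ℓ - 2 * p + (p + q)) := by omega
  rw [total_eq, Nat.cast_add, Nat.cast_add _ (p + q)]
  rcases e.hub_eq_yL_or_yR with he | he <;> rw [he] at hs
  · exact edist_add_edist_le_of_edist_le hs hyy
  · rw [add_comm]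
    exact edist_add_edist_le_of_edist_le hs (SimpleGraph.edist_comm.trans_le hyy)

theorem edist_yL_add_edist_yR_le (hpℓ : 3 * p ≤ 2 * ℓ + 1) (s : (sys n d l r ℓ p q).Vert) :
    (sys n d l r ℓ p q).graph.edist s ((sys n d l r ℓ p q).ext .yL) +
      (sys n d l r ℓ p q).graph.edist s ((sys n d l r ℓ p q).ext .yR) ≤
        (6 * ℓ - 3 * p + q : ℕ) := by
  induction s using PathSys.vert_cases with
  | ext e =>
    exact edist_yL_add_edist_yR_le_of_edist_hub_le hpℓ
      ((edist_ext_hub_le e).trans (Nat.cast_le.mpr (e.hubDist_le hpℓ)))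
  | pt i t ht =>
    have hsrc := edist_ext_hub_le (l := l) (r := r) (ℓ := ℓ) (p := p) (q := q)
      ((sys n d l r ℓ p q).src i)
    have hdst := edist_ext_hub_le (l := l) (r := r) (ℓ := ℓ) (p := p) (q := q)
      ((sys n d l r ℓ p q).dst i)
    rcases path_on_one_side_or_crossing (q := q) hpℓ i with
      ⟨hub_eq, total_le⟩ | ⟨src_hub, dst_hub, total_le⟩
    · rw [← hub_eq] at hdst
      exact edist_yL_add_edist_yR_le_of_edist_hub_le hpℓ
        (PathSys.edist_pt_le_of_ends ht hsrc hdst total_le)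
    · rw [src_hub] at hsrc
      rw [dst_hub] at hdst
      exact (PathSys.edist_pt_add_edist_pt_le ht hsrc hdst).trans (Nat.cast_le.mpr total_le)

theorem diam_upper_bound_general (hpℓ : 3 * p ≤ 2 * ℓ + 1) :
    (sys n d l r ℓ p q).graph.ediam ≤ (6 * ℓ - 3 * p + q : ℕ) :=
  ediam_le_of_edist_add_edist_le (edist_yL_add_edist_yR_le hpℓ)

end

theorem diam_upper_bound (n d ℓ p q : ℕ) (hn : 1 ≤ n) (hd : 1 ≤ d) (hℓ : 1 ≤ ℓ)
    (hp : p ≤ 1) (l r : Fin n → Fin d → Fin 2) :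
    (∀ s t : (sys n d l r ℓ p q).Vert,
      (sys n d l r ℓ p q).graph.dist s t ≤ 6 * ℓ - 3 * p + q) ∧
    (sys n d l r ℓ p q).graph.diam ≤ 6 * ℓ - 3 * p + q := by
  have hG := diam_upper_bound_general (l := l) (r := r) (q := q) (show 3 * p ≤ 2 * ℓ + 1 by omega)
  exact ⟨fun _ _ => ENat.toNat_le_of_le_natCast (SimpleGraph.edist_le_ediam.trans hG),
    ENat.toNat_le_of_le_natCast hG⟩

end GraphOV
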